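/- Let M be a subset of a homogeneous effect algebra E such that M is compatible with covers in the closure M̄ of M. Then M̄ is internally compatible. -/

import Mathlib

/-- An effect algebra: a partial commutative, associative operation `oplus`
(with definedness encoded via `Option`), constants `zero` and `one`,
unique orthosupplements, and `a ⊕ 1` defined only for `a = 0`. -/
structure EffectAlgebra (E : Type*) where
  oplus : E → E → Option E
  zero : E
  one : E
  comm : ∀ a b, oplus a b = oplus b a
  assoc : ∀ a b c ab abc, oplus a b = some ab → oplus ab c = some abc →
    ∃ bc, oplus b c = some bc ∧ oplus a bc = some abc
  compl_exists : ∀ a, ∃ b, oplus a b = some one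
  compl_unique : ∀ a b c, oplus a b = some one → oplus a c = some one → b = c
  add_one : ∀ a b, oplus a one = some b → a = zero

namespace EffectAlgebra

variable {E : Type*} (A : EffectAlgebra E)

/-- `a ⊥ b` : the sum `a ⊕ b` is defined. -/
def Perp (a b : E) : Prop := (A.oplus a b).isSome

/-- `a ≤ b` iff `b = a ⊕ c` for some `c`. -/
def le (a b : E) : Prop := ∃ c, A.oplus a c = some b

/-- The orthosupplement `a'`: the unique `b` with `a ⊕ b = 1`. -/
noncomputable def compl (a : E) : E :=
  @Classical.epsilon E ⟨A.zero⟩ fun b => A.oplus a b = some A.one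

/-- `a ⊖ b` : the unique `c` with `b ⊕ c = a` (defined when `b ≤ a`). -/
noncomputable def ominus (a b : E) : E :=
  @Classical.epsilon E ⟨A.zero⟩ fun c => A.oplus b c = some a

/-- Homogeneity. -/
def Homogeneous : Prop :=
  ∀ u v₁ v₂ s, A.oplus v₁ v₂ = some s → A.le u s → A.le u (A.compl s) →
    ∃ u₁ u₂, A.le u₁ v₁ ∧ A.le u₂ v₂ ∧ A.oplus u₁ u₂ = some u

/-- Riesz decomposition property. -/
def RDP : Prop :=
  ∀ u v₁ v₂ s, A.oplus v₁ v₂ = some s → A.le u s →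
    ∃ u₁ u₂, A.le u₁ v₁ ∧ A.le u₂ v₂ ∧ A.oplus u₁ u₂ = some u

/-- The sum `c₁ ⊕ … ⊕ cₙ` of a finite family (a list); `some s` iff the family
is orthogonal with sum `s`. -/
def sumList : List E → Option E
  | [] => some A.zero
  | x :: xs => (sumList xs).bind fun s => A.oplus x s

/-- The subfamily of `C` indexed by a set of indices `S ⊆ {1,…,n}`. -/
def pickList (C : List E) (S : Finset (Fin C.length)) : List E :=
  (S.sort (· ≤ ·)).map C.get

/-- `C` is an orthogonal cover of `M`. -/
def IsCoverOf (C : List E) (M : Set E) : Prop :=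
  (A.sumList C).isSome ∧
    ∀ a ∈ M, ∃ S : Finset (Fin C.length), A.sumList (pickList C S) = some a

/-- `M` is compatible with covers in `X`: every finite subset of `M` has an
orthogonal cover with range contained in `X`. -/
def CompatWithCoversIn (M X : Set E) : Prop :=
  ∀ F : Finset E, ↑F ⊆ M →
    ∃ C : List E, (∀ c ∈ C, c ∈ X) ∧ A.IsCoverOf C ↑F

/-- `M` is compatible (with covers in `E`). -/
def Compatible (M : Set E) : Prop := A.CompatWithCoversIn M Set.univ

/-- `M` is internally compatible. -/
def InternallyCompatible (M : Set E) : Prop := A.CompatWithCoversIn M M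

/-- `D` is a refinement of `C`: a partition `{P i}` of the index set of `D`
with `C i = ⊕_{j ∈ P i} D j`. -/
def IsRefinement (D C : List E) : Prop :=
  ∃ P : Fin C.length → Finset (Fin D.length),
    (∀ i j, i ≠ j → Disjoint (P i) (P j)) ∧
    (∀ k, ∃ i, k ∈ P i) ∧
    (∀ i, A.sumList (pickList D (P i)) = some (C.get i))

/-- One step of the closure construction `M ↦ M₁`. -/
def closureStep (M : Set E) : Set E :=
  {x | ∃ y ∈ M, A.le x y ∧ A.le x (A.compl y)} ∪
  {z | ∃ y ∈ M, ∃ x, A.le x y ∧ A.le x (A.compl y) ∧ A.oplus x z = some y}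

/-- The sets `Mₙ`. -/
def closureSeq (M : Set E) (n : ℕ) : Set E := (A.closureStep)^[n] M

/-- The closure `M̄ = ⋃ₙ Mₙ`. -/
def closure (M : Set E) : Set E := ⋃ n, A.closureSeq M n

/-- `B` is a sub-effect algebra of `E`. -/
def IsSubEA (B : Set E) : Prop :=
  A.one ∈ B ∧ ∀ a ∈ B, ∀ b ∈ B, A.le b a → A.ominus a b ∈ B

/-- The Riesz decomposition property for (the effect algebra on) a subset `B`. -/
def RDPOn (B : Set E) : Prop :=
  ∀ u v₁ v₂ s, u ∈ B → v₁ ∈ B → v₂ ∈ B → A.oplus v₁ v₂ = some s → A.le u s →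
    ∃ u₁ u₂, u₁ ∈ B ∧ u₂ ∈ B ∧ A.le u₁ v₁ ∧ A.le u₂ v₂ ∧ A.oplus u₁ u₂ = some u

/-- Homogeneity for (the effect algebra on) a subset `B`. -/
def HomogeneousOn (B : Set E) : Prop :=
  ∀ u v₁ v₂ s, u ∈ B → v₁ ∈ B → v₂ ∈ B → A.oplus v₁ v₂ = some s →
    A.le u s → A.le u (A.compl s) →
    ∃ u₁ u₂, u₁ ∈ B ∧ u₂ ∈ B ∧ A.le u₁ v₁ ∧ A.le u₂ v₂ ∧ A.oplus u₁ u₂ = some u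

/-- A block: a maximal sub-effect algebra satisfying the Riesz decomposition
property. -/
def IsBlock (B : Set E) : Prop :=
  A.IsSubEA B ∧ A.RDPOn B ∧
    ∀ B', A.IsSubEA B' → A.RDPOn B' → B ⊆ B' → B' = B

/-- A block of the sub-effect algebra on `F`: a maximal sub-effect algebra of
`F` satisfying the Riesz decomposition property. -/
def IsBlockIn (F B : Set E) : Prop :=
  B ⊆ F ∧ A.IsSubEA B ∧ A.RDPOn B ∧
    ∀ B', B' ⊆ F → A.IsSubEA B' → A.RDPOn B' → B ⊆ B' → B' = B

/-- `a` is sharp: the infimum `a ∧ a'` exists and equals `0`, i.e. every common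
lower bound of `a` and `a'` is `0`. -/
def Sharp (a : E) : Prop :=
  ∀ b, A.le b a → A.le b (A.compl a) → b = A.zero

/-- `a` is sharp in the sub-effect algebra on `F`. -/
def SharpIn (F : Set E) (a : E) : Prop :=
  a ∈ F ∧ ∀ b ∈ F, A.le b a → A.le b (A.compl a) → b = A.zero

/-- `a` is principal. -/
def Principal (a : E) : Prop :=
  ∀ x y s, A.le x a → A.le y a → A.oplus x y = some s → A.le s a

/-- `a` is principal in the sub-effect algebra on `B`. -/
def PrincipalIn (B : Set E) (a : E) : Prop :=
  a ∈ B ∧ ∀ x ∈ B, ∀ y ∈ B, ∀ s, A.le x a → A.le y a →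
    A.oplus x y = some s → A.le s a

/-- `a` is central: principal, and every `b` has a unique decomposition
`b = b₁ ⊕ b₂` with `b₁ ≤ a`, `b₂ ≤ a'`. -/
def Central (a : E) : Prop :=
  A.Principal a ∧ ∀ b, ∃! p : E × E,
    A.le p.1 a ∧ A.le p.2 (A.compl a) ∧ A.oplus p.1 p.2 = some b

/-- `a` is central in the sub-effect algebra on `B`. -/
def CentralIn (B : Set E) (a : E) : Prop :=
  A.PrincipalIn B a ∧ ∀ b ∈ B, ∃! p : E × E,
    p.1 ∈ B ∧ p.2 ∈ B ∧ A.le p.1 a ∧ A.le p.2 (A.compl a) ∧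
      A.oplus p.1 p.2 = some b

/-- The center `C(E)`. -/
def center : Set E := {a | A.Central a}

/-- The compatibility center `K(E)`: the intersection of all blocks. -/
def compatCenter : Set E := {x | ∀ B, A.IsBlock B → x ∈ B}

end EffectAlgebra

/-!
A closure step adjoins, for each `y`, the summands `x` of `y` with `x ⊥ y` and the remainders
`y ⊖ x`. If `y = c₁ ⊕ … ⊕ cₖ` with the `cᵢ` in an orthogonal cover, homogeneity decomposes such an
`x` as `x₁ ⊕ … ⊕ xₖ` with `xᵢ ≤ cᵢ` and `xᵢ ⊥ cᵢ`. Replacing each `cᵢ` by the pair `xᵢ`, `cᵢ ⊖ xᵢ`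
yields an orthogonal family whose new members arise from the old ones by a closure step, and whose
partial sums include `x`, `y ⊖ x` and all old partial sums. A set stable under closure steps, such
as `M̄`, therefore contains covers of everything that finitely many closure steps produce from `M`.
-/

namespace EffectAlgebra

variable {E : Type*} {A : EffectAlgebra E}

section PartialSum

variable {a a' b b' c s x y z : E}

theorem oplus_eq_some_comm : A.oplus a b = some s ↔ A.oplus b a = some s := by
  rw [A.comm]

theorem exists_oplus_assoc_symm {bc : E} (hbc : A.oplus b c = some bc)
    (habc : A.oplus a bc = some s) :
    ∃ ab, A.oplus a b = some ab ∧ A.oplus ab c = some s := by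
  obtain ⟨ba, hba, hcba⟩ :=
    A.assoc c b a bc s (oplus_eq_some_comm.1 hbc) (oplus_eq_some_comm.1 habc)
  exact ⟨ba, oplus_eq_some_comm.1 hba, oplus_eq_some_comm.1 hcba⟩

theorem exists_oplus_oplus_oplus_comm {ab cd d : E} (hab : A.oplus a b = some ab)
    (hcd : A.oplus c d = some cd) (hs : A.oplus ab cd = some s) :
    ∃ ac bd, A.oplus a c = some ac ∧ A.oplus b d = some bd ∧ A.oplus ac bd = some s := by
  obtain ⟨bcd, hbcd, habcd⟩ := A.assoc a b cd ab s hab hs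
  obtain ⟨bc, hbc, hbc_d⟩ := exists_oplus_assoc_symm hcd hbcd
  obtain ⟨bd, hbd, hc_bd⟩ := A.assoc c b d bc bcd (oplus_eq_some_comm.1 hbc) hbc_d
  obtain ⟨ac, hac, hac_bd⟩ := exists_oplus_assoc_symm hc_bd habcd
  exact ⟨ac, bd, hac, hbd, hac_bd⟩

theorem oplus_compl (a : E) : A.oplus a (A.compl a) = some A.one :=
  Classical.epsilon_spec (p := fun b => A.oplus a b = some A.one) (A.compl_exists a)

theorem oplus_zero (a : E) : A.oplus a A.zero = some a := by
  have compl_one : A.compl A.one = A.zero :=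
    A.add_one _ _ (oplus_eq_some_comm.1 (oplus_compl A.one))
  have one_oplus_zero : A.oplus A.one A.zero = some A.one := compl_one ▸ oplus_compl A.one
  have compl_oplus : A.oplus (A.compl a) a = some A.one := oplus_eq_some_comm.1 (oplus_compl a)
  obtain ⟨a₀, ha₀, hone⟩ := A.assoc _ _ _ _ _ compl_oplus one_oplus_zero
  rw [ha₀, A.compl_unique _ _ _ hone compl_oplus]

theorem oplus_left_cancel (hb : A.oplus a b = some s) (hc : A.oplus a c = some s) : b = c := by
  obtain ⟨t, hat, hbt⟩ := A.assoc _ _ _ _ _ (oplus_eq_some_comm.1 hb) (oplus_compl s)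
  obtain ⟨t', hat', hct⟩ := A.assoc _ _ _ _ _ (oplus_eq_some_comm.1 hc) (oplus_compl s)
  obtain rfl : t = t' := Option.some_injective _ (hat.symm.trans hat')
  exact A.compl_unique t b c (oplus_eq_some_comm.1 hbt) (oplus_eq_some_comm.1 hct)

theorem eq_zero_of_oplus_eq_zero (h : A.oplus a b = some A.zero) :
    a = A.zero ∧ b = A.zero := by
  have left_eq_zero {a b : E} (h : A.oplus a b = some A.zero) : a = A.zero := by
    obtain ⟨s, hs, -⟩ := exists_oplus_assoc_symm h (oplus_zero A.one)
    exact A.add_one a s (oplus_eq_some_comm.1 hs)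
  exact ⟨left_eq_zero h, left_eq_zero (oplus_eq_some_comm.1 h)⟩

theorem perp_of_oplus_eq_some (h : A.oplus a b = some s) : A.Perp a b :=
  Option.isSome_iff_exists.2 ⟨s, h⟩

theorem Perp.symm (h : A.Perp a b) : A.Perp b a := by
  rwa [Perp, A.comm]

theorem Perp.mono_left (h : A.Perp a b) (ha : A.le a' a) : A.Perp a' b := by
  obtain ⟨r, hr⟩ := ha
  obtain ⟨s, hs⟩ := Option.isSome_iff_exists.1 h
  obtain ⟨t, ht, -⟩ := A.assoc _ _ _ _ _ (oplus_eq_some_comm.1 hr) hs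
  exact perp_of_oplus_eq_some ht

theorem Perp.mono (h : A.Perp a b) (ha : A.le a' a) (hb : A.le b' b) : A.Perp a' b' :=
  ((h.mono_left ha).symm.mono_left hb).symm

theorem le_compl_iff_perp : A.le a (A.compl b) ↔ A.Perp a b := by
  constructor
  · intro h
    exact (perp_of_oplus_eq_some (oplus_compl b)).symm.mono_left h
  · intro h
    obtain ⟨s, hs⟩ := Option.isSome_iff_exists.1 h.symm
    obtain ⟨t, hat, hbt⟩ := A.assoc _ _ _ _ _ hs (oplus_compl s)
    rw [A.compl_unique b _ _ (oplus_compl b) hbt]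
    exact ⟨_, hat⟩

theorem Homogeneous.exists_common_decomposition (hH : A.Homogeneous) {v₁ v₂ : E}
    (hv : A.oplus v₁ v₂ = some y) (hxz : A.oplus x z = some y) (hxy : A.Perp x y) :
    ∃ x₁ x₂ z₁ z₂, A.oplus x₁ x₂ = some x ∧ A.oplus z₁ z₂ = some z ∧
      A.oplus x₁ z₁ = some v₁ ∧ A.oplus x₂ z₂ = some v₂ ∧ A.Perp x₁ v₁ ∧ A.Perp x₂ v₂ := by
  obtain ⟨x₁, x₂, ⟨z₁, hz₁⟩, ⟨z₂, hz₂⟩, hx⟩ :=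
    hH x v₁ v₂ y hv ⟨z, hxz⟩ (le_compl_iff_perp.2 hxy)
  obtain ⟨x', z', hx', hz', hxz'⟩ := exists_oplus_oplus_oplus_comm hz₁ hz₂ hv
  obtain rfl : x = x' := Option.some_injective _ (hx.symm.trans hx')
  obtain rfl : z = z' := oplus_left_cancel hxz hxz'
  exact ⟨x₁, x₂, z₁, z₂, hx, hz', hz₁, hz₂, hxy.mono ⟨x₂, hx⟩ ⟨v₂, hv⟩,
    hxy.mono ⟨x₁, oplus_eq_some_comm.1 hx⟩ ⟨v₁, oplus_eq_some_comm.1 hv⟩⟩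

end PartialSum

section Closure

variable {M N : Set E}

theorem mem_closureStep {u : E} :
    u ∈ A.closureStep M ↔
      ∃ y ∈ M, ∃ x z, A.oplus x z = some y ∧ A.Perp x y ∧ (u = x ∨ u = z) := by
  simp only [closureStep, Set.mem_union, Set.mem_ofPred_eq, le_compl_iff_perp]
  constructor
  · rintro (⟨y, hy, ⟨z, hz⟩, hperp⟩ | ⟨y, hy, x, -, hperp, hu⟩)
    · exact ⟨y, hy, u, z, hz, hperp, .inl rfl⟩
    · exact ⟨y, hy, x, u, hu, hperp, .inr rfl⟩
  · rintro ⟨y, hy, x, z, hxz, hperp, rfl | rfl⟩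
    · exact .inl ⟨y, hy, ⟨z, hxz⟩, hperp⟩
    · exact .inr ⟨y, hy, x, ⟨u, hxz⟩, hperp, hxz⟩

theorem subset_closureStep : M ⊆ A.closureStep M := by
  intro y hy
  have zero_oplus : A.oplus A.zero y = some y := oplus_eq_some_comm.1 (oplus_zero y)
  exact mem_closureStep.2
    ⟨y, hy, A.zero, y, zero_oplus, perp_of_oplus_eq_some zero_oplus, .inr rfl⟩

theorem closureStep_mono (h : M ⊆ N) : A.closureStep M ⊆ A.closureStep N := by
  intro u hu
  obtain ⟨y, hy, hyu⟩ := mem_closureStep.1 hu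
  exact mem_closureStep.2 ⟨y, h hy, hyu⟩

theorem exists_finset_subset_closureStep {F : Finset E} (hF : ↑F ⊆ A.closureStep M) :
    ∃ G : Finset E, ↑G ⊆ M ∧ ↑F ⊆ A.closureStep (G : Set E) := by
  classical
  choose! y hyM hy using fun u (hu : u ∈ F) => mem_closureStep.1 (hF hu)
  refine ⟨F.image y, by simpa [Set.subset_def] using hyM, fun u hu => ?_⟩
  exact mem_closureStep.2 ⟨y u, Finset.mem_image_of_mem y hu, hy u hu⟩

theorem closureSeq_succ (n : ℕ) : A.closureSeq M (n + 1) = A.closureStep (A.closureSeq M n) :=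
  Function.iterate_succ_apply' _ _ _

theorem closureSeq_mono : Monotone (A.closureSeq M) :=
  monotone_nat_of_le_succ fun n => (closureSeq_succ (A := A) n).symm ▸ subset_closureStep

theorem closureStep_closure_subset : A.closureStep (A.closure M) ⊆ A.closure M := by
  intro u hu
  obtain ⟨y, hy, hyu⟩ := mem_closureStep.1 hu
  obtain ⟨n, hn⟩ := Set.mem_iUnion.1 hy
  refine Set.mem_iUnion.2 ⟨n + 1, ?_⟩
  rw [closureSeq_succ]
  exact mem_closureStep.2 ⟨y, hn, hyu⟩

end Closure

section Subsums

variable {C D D' : List E} {a b c w x : E}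

theorem sumList_cons_eq_some :
    A.sumList (c :: C) = some b ↔ ∃ a, A.sumList C = some a ∧ A.oplus c a = some b := by
  simp only [sumList, Option.bind_eq_some_iff]

variable (A) in
/-- The set of partial sums of the family `C`. Subfamilies are encoded as sublists, which are
easier to recurse on than the index sets of `pickList`. -/
def subsums (C : List E) : Set E := {a | ∃ L, L.Sublist C ∧ A.sumList L = some a}

theorem exists_sumList_pickList_iff_mem_subsums :
    (∃ S : Finset (Fin C.length), A.sumList (pickList C S) = some a) ↔ a ∈ A.subsums C := by
  constructor
  · rintro ⟨S, hS⟩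
    exact ⟨_, List.map_getElem_sublist (Finset.sortedLT_sort S).pairwise, hS⟩
  · rintro ⟨L, hLC, hL⟩
    obtain ⟨is, rfl, his⟩ := List.sublist_eq_map_getElem hLC
    have sort_toFinset : is.toFinset.sort (· ≤ ·) = is :=
      (List.toFinset_sort (· ≤ ·) (his.imp ne_of_lt)).2 (his.imp le_of_lt)
    refine ⟨is.toFinset, ?_⟩
    rwa [pickList, sort_toFinset]

theorem isCoverOf_iff {M : Set E} :
    A.IsCoverOf C M ↔ (A.sumList C).isSome ∧ M ⊆ A.subsums C := by
  simp only [IsCoverOf, exists_sumList_pickList_iff_mem_subsums, Set.subset_def]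

theorem zero_mem_subsums : A.zero ∈ A.subsums C := ⟨[], C.nil_sublist, rfl⟩

theorem mem_subsums_cons :
    b ∈ A.subsums (c :: C) ↔ b ∈ A.subsums C ∨ ∃ a ∈ A.subsums C, A.oplus c a = some b := by
  constructor
  · rintro ⟨L, hLC, hL⟩
    rcases List.sublist_cons_iff.1 hLC with hLC' | ⟨L', rfl, hLC'⟩
    · exact .inl ⟨L, hLC', hL⟩
    · obtain ⟨a, ha, hab⟩ := sumList_cons_eq_some.1 hL
      exact .inr ⟨a, ⟨L', hLC', ha⟩, hab⟩
  · rintro (⟨L, hLC, hL⟩ | ⟨a, ⟨L, hLC, hL⟩, hab⟩)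
    · exact ⟨L, hLC.cons c, hL⟩
    · exact ⟨c :: L, hLC.cons_cons c, sumList_cons_eq_some.2 ⟨a, hL, hab⟩⟩

theorem subsums_subset_subsums_cons : A.subsums C ⊆ A.subsums (c :: C) :=
  fun _ h => mem_subsums_cons.2 (.inl h)

theorem mem_subsums_cons_of_oplus (ha : a ∈ A.subsums C) (hab : A.oplus c a = some b) :
    b ∈ A.subsums (c :: C) :=
  mem_subsums_cons.2 (.inr ⟨a, ha, hab⟩)

variable (A) in
/-- `D` has the same sum as the orthogonal family `C` and at least its partial sums. This is the
part of `IsRefinement` that matters for covers, without the partition of indices. -/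
structure WeaklyRefines (D C : List E) : Prop where
  sumList_eq_some {s : E} : A.sumList C = some s → A.sumList D = some s
  subsums_subset : A.subsums C ⊆ A.subsums D

theorem WeaklyRefines.refl (C : List E) : A.WeaklyRefines C C := ⟨id, subset_rfl⟩

theorem WeaklyRefines.trans (h' : A.WeaklyRefines D' D) (h : A.WeaklyRefines D C) :
    A.WeaklyRefines D' C :=
  ⟨fun hs => h'.sumList_eq_some (h.sumList_eq_some hs), h.subsums_subset.trans h'.subsums_subset⟩

theorem WeaklyRefines.isSome_sumList (h : A.WeaklyRefines D C) (hC : (A.sumList C).isSome) :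
    (A.sumList D).isSome := by
  obtain ⟨s, hs⟩ := Option.isSome_iff_exists.1 hC
  exact Option.isSome_iff_exists.2 ⟨s, h.sumList_eq_some hs⟩

theorem WeaklyRefines.cons (h : A.WeaklyRefines D C) : A.WeaklyRefines (c :: D) (c :: C) where
  sumList_eq_some hs := by
    obtain ⟨a, ha, has⟩ := sumList_cons_eq_some.1 hs
    exact sumList_cons_eq_some.2 ⟨a, h.sumList_eq_some ha, has⟩
  subsums_subset b hb := by
    rcases mem_subsums_cons.1 hb with hb | ⟨a, ha, hab⟩
    · exact subsums_subset_subsums_cons (h.subsums_subset hb)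
    · exact mem_subsums_cons_of_oplus (h.subsums_subset ha) hab

theorem weaklyRefines_split (hc : A.oplus x w = some c) :
    A.WeaklyRefines (x :: w :: C) (c :: C) where
  sumList_eq_some hs := by
    obtain ⟨a, ha, has⟩ := sumList_cons_eq_some.1 hs
    obtain ⟨wa, hwa, hxwa⟩ := A.assoc _ _ _ _ _ hc has
    exact sumList_cons_eq_some.2 ⟨wa, sumList_cons_eq_some.2 ⟨a, ha, hwa⟩, hxwa⟩
  subsums_subset b hb := by
    rcases mem_subsums_cons.1 hb with hb | ⟨a, ha, hab⟩
    · exact subsums_subset_subsums_cons (subsums_subset_subsums_cons hb)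
    · obtain ⟨wa, hwa, hxwa⟩ := A.assoc _ _ _ _ _ hc hab
      exact mem_subsums_cons_of_oplus (mem_subsums_cons_of_oplus ha hwa) hxwa

end Subsums

section Refinement

variable {C L : List E} {M X : Set E} {x y z : E}

theorem Homogeneous.exists_weaklyRefines_of_sublist (hH : A.Homogeneous) (hLC : L.Sublist C)
    (hL : A.sumList L = some y) (hxz : A.oplus x z = some y) (hxy : A.Perp x y)
    (hCX : ∀ c ∈ C, c ∈ X) :
    ∃ D, (∀ d ∈ D, d ∈ A.closureStep X) ∧ A.WeaklyRefines D C ∧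
      x ∈ A.subsums D ∧ z ∈ A.subsums D := by
  induction hLC generalizing x y z with
  | slnil =>
    obtain rfl : A.zero = y := Option.some_injective _ hL
    obtain ⟨rfl, rfl⟩ := eq_zero_of_oplus_eq_zero hxz
    exact ⟨[], by simp, .refl [], zero_mem_subsums, zero_mem_subsums⟩
  | @cons L C c _ ih =>
    obtain ⟨hc, hCX⟩ := List.forall_mem_cons.1 hCX
    obtain ⟨D, hDX, hDC, hx, hz⟩ := ih hL hxz hxy hCX
    exact ⟨c :: D, List.forall_mem_cons.2 ⟨subset_closureStep hc, hDX⟩, hDC.cons,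
      subsums_subset_subsums_cons hx, subsums_subset_subsums_cons hz⟩
  | @cons_cons L C c _ ih =>
    obtain ⟨hc, hCX⟩ := List.forall_mem_cons.1 hCX
    obtain ⟨s, hs, hcs⟩ := sumList_cons_eq_some.1 hL
    obtain ⟨x₁, x₂, z₁, z₂, hx, hz, hxz₁, hxz₂, hperp₁, hperp₂⟩ :=
      hH.exists_common_decomposition hcs hxz hxy
    obtain ⟨D, hDX, hDC, hx₂, hz₂⟩ := ih hs hxz₂ hperp₂ hCX
    have hx₁X : x₁ ∈ A.closureStep X :=
      mem_closureStep.2 ⟨c, hc, x₁, z₁, hxz₁, hperp₁, .inl rfl⟩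
    have hz₁X : z₁ ∈ A.closureStep X :=
      mem_closureStep.2 ⟨c, hc, x₁, z₁, hxz₁, hperp₁, .inr rfl⟩
    refine ⟨x₁ :: z₁ :: D, ?_, (weaklyRefines_split hxz₁).trans hDC.cons, ?_, ?_⟩
    · exact List.forall_mem_cons.2 ⟨hx₁X, List.forall_mem_cons.2 ⟨hz₁X, hDX⟩⟩
    · exact mem_subsums_cons_of_oplus (subsums_subset_subsums_cons hx₂) hx
    · exact subsums_subset_subsums_cons (mem_subsums_cons_of_oplus hz₂ hz)

theorem Homogeneous.exists_weaklyRefines_of_subset_closureStep (hH : A.Homogeneous)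
    (hX : A.closureStep X ⊆ X) (hCX : ∀ c ∈ C, c ∈ X) {F : Finset E}
    (hF : ↑F ⊆ A.closureStep (A.subsums C)) :
    ∃ D, (∀ d ∈ D, d ∈ X) ∧ A.WeaklyRefines D C ∧ ↑F ⊆ A.subsums D := by
  classical
  induction F using Finset.induction_on with
  | empty => exact ⟨C, hCX, .refl C, by simp⟩
  | insert u F _ ih =>
    rw [Finset.coe_insert, Set.insert_subset_iff] at hF
    obtain ⟨D, hDX, hDC, hFD⟩ := ih hF.2
    obtain ⟨y, hy, x, z, hxz, hxy, hu⟩ := mem_closureStep.1 hF.1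
    obtain ⟨L, hLD, hL⟩ := hDC.subsums_subset hy
    obtain ⟨D', hD'X, hD'D, hx, hz⟩ := hH.exists_weaklyRefines_of_sublist hLD hL hxz hxy hDX
    have hu' : u ∈ A.subsums D' := by
      rcases hu with rfl | rfl <;> assumption
    refine ⟨D', fun d hd => hX (hD'X d hd), hD'D.trans hDC, ?_⟩
    rw [Finset.coe_insert, Set.insert_subset_iff]
    exact ⟨hu', hFD.trans hD'D.subsums_subset⟩

theorem CompatWithCoversIn.closureStep (hM : A.CompatWithCoversIn M X) (hH : A.Homogeneous)
    (hX : A.closureStep X ⊆ X) : A.CompatWithCoversIn (A.closureStep M) X := by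
  intro F hF
  obtain ⟨G, hGM, hFG⟩ := exists_finset_subset_closureStep hF
  obtain ⟨C, hCX, hC⟩ := hM G hGM
  obtain ⟨hCsum, hGC⟩ := isCoverOf_iff.1 hC
  obtain ⟨D, hDX, hDC, hFD⟩ :=
    hH.exists_weaklyRefines_of_subset_closureStep hX hCX (hFG.trans (closureStep_mono hGC))
  exact ⟨D, hDX, isCoverOf_iff.2 ⟨hDC.isSome_sumList hCsum, hFD⟩⟩

theorem CompatWithCoversIn.closureSeq (hM : A.CompatWithCoversIn M X) (hH : A.Homogeneous)
    (hX : A.closureStep X ⊆ X) (n : ℕ) : A.CompatWithCoversIn (A.closureSeq M n) X := by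
  induction n with
  | zero => exact hM
  | succ n ih => exact closureSeq_succ (A := A) n ▸ ih.closureStep hH hX

theorem CompatWithCoversIn.closure (hM : A.CompatWithCoversIn M X) (hH : A.Homogeneous)
    (hX : A.closureStep X ⊆ X) : A.CompatWithCoversIn (A.closure M) X := by
  intro F hF
  obtain ⟨n, hFn⟩ :=
    closureSeq_mono.directed_le.exists_mem_subset_of_finset_subset_biUnion hF
  exact hM.closureSeq hH hX n F hFn

end Refinement

end EffectAlgebra

/-- If `M` is compatible with covers in `M̄`, then `M̄` is
internally compatible. -/
theorem closure_internally_compatible {E : Type*} (A : EffectAlgebra E)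
    (hH : A.Homogeneous) (M : Set E)
    (hM : A.CompatWithCoversIn M (A.closure M)) :
    A.InternallyCompatible (A.closure M) :=
  hM.closure hH EffectAlgebra.closureStep_closure_subset
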